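/- arXiv:1606.01446 — 5 statements merged into one kernel-verified Lean document; each statement's English description precedes it below -/
import Mathlib

section
/- Let (B, ∗, ∘) be a biquandle and let x, y be two elements of B. If x ∗ y = y ∘ x, then x = y. -/
/-- A biquandle structure on a type `B`: two binary operations `star` and `circ`
satisfying the biquandle axioms. -/
structure IsBiquandle {B : Type*} (star circ : B → B → B) : Prop where
  idem : ∀ x, star x x = circ x x
  bij_star : ∀ x, Function.Bijective fun y => star y x
  bij_circ : ∀ x, Function.Bijective fun y => circ y x
  bij_S : Function.Bijective fun p : B × B => (circ p.2 p.1, star p.1 p.2)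
  ax3a : ∀ x y z, circ (circ z y) (star x y) = circ (circ z x) (circ y x)
  ax3b : ∀ x y z, star (circ y x) (circ z x) = circ (star y z) (star x z)
  ax3c : ∀ x y z, star (star x y) (circ z y) = star (star x z) (star y z)

section

variable {B : Type*} {star circ : B → B → B}

theorem circ_right_eq_of_star_eq_circ
    (circ_inj : ∀ x, Function.Injective fun y => circ y x)
    (circ_exchange : ∀ x y z, circ (circ z y) (star x y) = circ (circ z x) (circ y x))
    {x y : B} (h : star x y = circ y x) (z : B) : circ z y = circ z x := by
  refine circ_inj (circ y x) ?_
  calc circ (circ z y) (circ y x)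
      = circ (circ z y) (star x y) := by rw [h]
    _ = circ (circ z x) (circ y x) := circ_exchange x y z

theorem stmt_0_general
    (star_self : ∀ x, star x x = circ x x)
    (star_inj : ∀ x, Function.Injective fun y => star y x)
    (circ_inj : ∀ x, Function.Injective fun y => circ y x)
    (circ_exchange : ∀ x y z, circ (circ z y) (star x y) = circ (circ z x) (circ y x))
    {x y : B} (h : star x y = circ y x) : x = y := by
  refine star_inj y ?_
  calc star x y
      = circ y x := h
    _ = circ y y := (circ_right_eq_of_star_eq_circ circ_inj circ_exchange h y).symm
    _ = star y y := (star_self y).symm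

end

/-- Lemma 5.3: in a biquandle, if `x ∗ y = y ∘ x` then `x = y`. -/
theorem stmt_0 {B : Type*} (star circ : B → B → B)
    (hB : IsBiquandle star circ) (x y : B) (h : star x y = circ y x) : x = y :=
  stmt_0_general hB.idem (fun z => (hB.bij_star z).injective)
    (fun z => (hB.bij_circ z).injective) hB.ax3a h
end

section
/- Let (Q, {∗_i}_{i∈ℤ}) be an indexed quandle, A an abelian group (written multiplicatively), and ψ = {φ_i : Q×Q → A}_{i∈ℤ} a family of maps. Define on the set E(Q,A,ψ) = A × Q the operations (a₁, x₁) ∗_i (a₂, x₂) = (a₁ · φ_i(x₁, x₂), x₁ ∗_i x₂) for each i ∈ ℤ. Then (E(Q,A,ψ), {∗_i}_{i∈ℤ}) is an indexed quandle if and only if ψ is a generalized indexed quandle 2-cocycle, i.e., φ_i(a,c)⁻¹ · φ_i(a ∗_{i−j} b, c) · φ_{i−j}(a,b) · φ_{i−j}(a ∗_i c, b ∗_j c)⁻¹ = 1 for all a,b,c ∈ Q and i,j ∈ ℤ, and φ_0(a,a) = 1 for all a ∈ Q. -/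
/-- An indexed quandle structure on a type `Q`: a binary operation `op i` for each
`i : ℤ`, satisfying the indexed quandle axioms. -/
structure IsIndexedQuandle {Q : Type*} (op : ℤ → Q → Q → Q) : Prop where
  idem : ∀ a, op 0 a a = a
  bij : ∀ (i : ℤ) (b : Q), Function.Bijective fun a => op i a b
  distrib : ∀ (i j : ℤ) (a b c : Q),
    op j (op i a b) c = op i (op j a c) (op (j - i) b c)

/-- The operation on `E(Q, A, ψ) = A × Q` that twists a single operation of `Q` by a map
`φ : Q × Q → A`; the operation of index `i` on `E(Q, A, ψ)` is `extensionOp (op i) (φ i)`. -/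
def extensionOp {Q A : Type*} [Mul A] (op : Q → Q → Q) (φ : Q → Q → A) (p q : A × Q) : A × Q :=
  (p.1 * φ p.2 q.2, op p.2 q.2)

/-- Generalized indexed quandle 2-cocycles, with coefficients in a possibly noncommutative group.
The cocycle condition is written as an equality of two products, in the order in which the factors
appear in the distributivity law of `E(Q, A, ψ)`; the indices `(i, j)` here are the paper's
`(i - j, i)`. -/
structure IsIndexedQuandleCocycle {Q A : Type*} [Group A]
    (op : ℤ → Q → Q → Q) (φ : ℤ → Q → Q → A) : Prop where
  map_self : ∀ a, φ 0 a a = 1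
  mul_eq_mul : ∀ (i j : ℤ) (a b c : Q),
    φ i a b * φ j (op i a b) c = φ j a c * φ i (op j a c) (op (j - i) b c)

theorem extensionOp_self_iff {Q A : Type*} [LeftCancelMonoid A]
    (op : Q → Q → Q) (φ : Q → Q → A) (p : A × Q) :
    extensionOp op φ p p = p ↔ φ p.2 p.2 = 1 ∧ op p.2 p.2 = p.2 := by
  simp only [extensionOp, Prod.ext_iff, mul_eq_left]

theorem extensionOp_distrib_iff {Q A : Type*} [LeftCancelSemigroup A]
    (op₁ op₂ op₃ : Q → Q → Q) (φ₁ φ₂ φ₃ : Q → Q → A) (p q r : A × Q) :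
    extensionOp op₂ φ₂ (extensionOp op₁ φ₁ p q) r =
        extensionOp op₁ φ₁ (extensionOp op₂ φ₂ p r) (extensionOp op₃ φ₃ q r) ↔
      φ₁ p.2 q.2 * φ₂ (op₁ p.2 q.2) r.2 = φ₂ p.2 r.2 * φ₁ (op₂ p.2 r.2) (op₃ q.2 r.2) ∧
        op₂ (op₁ p.2 q.2) r.2 = op₁ (op₂ p.2 r.2) (op₃ q.2 r.2) := by
  simp only [extensionOp, Prod.ext_iff, mul_assoc, mul_right_inj]

theorem bijective_prodMk_mul_iff {A X Y : Type*} [Group A] (f : X → A) (g : X → Y) :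
    Function.Bijective (fun p : A × X => (p.1 * f p.2, g p.2)) ↔ Function.Bijective g := by
  constructor
  · rintro ⟨hinj, hsurj⟩
    refine ⟨fun x x' hx => ?_, fun y => ?_⟩
    · have hpair : ((f x)⁻¹, x) = ((f x')⁻¹, x') := hinj (by simp [hx])
      exact congrArg Prod.snd hpair
    · obtain ⟨p, hp⟩ := hsurj (1, y)
      exact ⟨p.2, congrArg Prod.snd hp⟩
  · rintro ⟨hinj, hsurj⟩
    refine ⟨?_, ?_⟩
    · rintro ⟨a, x⟩ ⟨a', x'⟩ h
      obtain ⟨hfst, hsnd⟩ := Prod.mk.inj h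
      obtain rfl : x = x' := hinj hsnd
      exact congrArg (·, x) (mul_right_cancel hfst)
    · rintro ⟨c, y⟩
      obtain ⟨x, rfl⟩ := hsurj y
      exact ⟨(c * (f x)⁻¹, x), by simp⟩

theorem bijective_extensionOp_iff {Q A : Type*} [Group A]
    (op : Q → Q → Q) (φ : Q → Q → A) (q : A × Q) :
    Function.Bijective (fun p => extensionOp op φ p q) ↔
      Function.Bijective (fun a => op a q.2) :=
  bijective_prodMk_mul_iff (φ · q.2) (op · q.2)

theorem isIndexedQuandleCocycle_iff {Q A : Type*} [CommGroup A]
    (op : ℤ → Q → Q → Q) (φ : ℤ → Q → Q → A) :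
    IsIndexedQuandleCocycle op φ ↔
      (∀ (i j : ℤ) (a b c : Q),
          (φ i a c)⁻¹ * φ i (op (i - j) a b) c * φ (i - j) a b *
            (φ (i - j) (op i a c) (op j b c))⁻¹ = 1) ∧
        ∀ a : Q, φ 0 a a = 1 := by
  have quotient_eq_one_iff (x y z w : A) : x⁻¹ * y * z * w⁻¹ = 1 ↔ z * y = x * w := by
    rw [mul_inv_eq_one, mul_assoc, inv_mul_eq_iff_eq_mul, mul_comm y z]
  simp only [quotient_eq_one_iff]
  constructor
  · intro h
    exact ⟨fun i j a b c => by simpa only [sub_sub_cancel] using h.mul_eq_mul (i - j) i a b c,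
      h.map_self⟩
  · rintro ⟨hmul, hself⟩
    exact ⟨hself, fun i j a b c => by simpa only [sub_sub_cancel] using hmul j (j - i) a b c⟩

theorem stmt_1_general {Q A : Type*} [Group A] (op : ℤ → Q → Q → Q) (φ : ℤ → Q → Q → A) :
    IsIndexedQuandle (fun i => extensionOp (op i) (φ i)) ↔
      IsIndexedQuandle op ∧ IsIndexedQuandleCocycle op φ := by
  constructor
  · intro hE
    have self_eq (a : Q) : φ 0 a a = 1 ∧ op 0 a a = a :=
      (extensionOp_self_iff _ _ (1, a)).1 (hE.idem _)
    have distrib_eq (i j : ℤ) (a b c : Q) :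
        φ i a b * φ j (op i a b) c = φ j a c * φ i (op j a c) (op (j - i) b c) ∧
          op j (op i a b) c = op i (op j a c) (op (j - i) b c) :=
      (extensionOp_distrib_iff _ _ _ _ _ _ (1, a) (1, b) (1, c)).1 (hE.distrib i j _ _ _)
    exact
      ⟨{ idem := fun a => (self_eq a).2
         bij := fun i b => (bijective_extensionOp_iff (op i) (φ i) (1, b)).1 (hE.bij i _)
         distrib := fun i j a b c => (distrib_eq i j a b c).2 },
       { map_self := fun a => (self_eq a).1
         mul_eq_mul := fun i j a b c => (distrib_eq i j a b c).1 }⟩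
  · rintro ⟨hQ, hφ⟩
    exact
      { idem := fun p => (extensionOp_self_iff _ _ p).2 ⟨hφ.map_self _, hQ.idem _⟩
        bij := fun i q => (bijective_extensionOp_iff _ _ q).2 (hQ.bij i _)
        distrib := fun i j p q r =>
          (extensionOp_distrib_iff _ _ _ _ _ _ p q r).2
            ⟨hφ.mul_eq_mul i j _ _ _, hQ.distrib i j _ _ _⟩ }

/-- Proposition 5.10: `E(Q, A, ψ) = A × Q` with operations
`(a₁, x₁) ∗_i (a₂, x₂) = (a₁ · φ_i(x₁, x₂), x₁ ∗_i x₂)` is an indexed quandle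
if and only if `ψ = {φ_i}` is a generalized indexed quandle 2-cocycle. -/
theorem stmt_1 {Q : Type*} {A : Type*} [CommGroup A]
    (op : ℤ → Q → Q → Q) (φ : ℤ → Q → Q → A)
    (hQ : IsIndexedQuandle op) :
    IsIndexedQuandle (fun (i : ℤ) (p q : A × Q) =>
        (p.1 * φ i p.2 q.2, op i p.2 q.2)) ↔
      ((∀ (i j : ℤ) (a b c : Q),
          (φ i a c)⁻¹ * φ i (op (i - j) a b) c * φ (i - j) a b *
            (φ (i - j) (op i a c) (op j b c))⁻¹ = 1) ∧
        ∀ a : Q, φ 0 a a = 1) :=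
  (stmt_1_general op φ).trans ((and_iff_right hQ).trans (isIndexedQuandleCocycle_iff op φ))
end

section
/- On the ring of Laurent polynomials ℤ[t, t⁻¹], the operations a ∗_i b = t·a + (1 − t)·b + i (for i ∈ ℤ, where i denotes the constant Laurent polynomial i) make ℤ[t, t⁻¹] an indexed quandle. -/
open LaurentPolynomial

section IndexedAlexanderOp

variable {R M : Type*} [Ring R] [AddCommGroup M] [Module R M]

/-- The Alexander quandle operation `(a, b) ↦ t • a + (1 - t) • b` of an `R`-module, translated
by the multiple `i • u` of a fixed vector `u`. -/
def indexedAlexanderOp (t : R) (u : M) (i : ℤ) (a b : M) : M :=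
  t • a + (1 - t) • b + i • u

theorem indexedAlexanderOp_zero_self (t : R) (u a : M) : indexedAlexanderOp t u 0 a a = a := by
  rw [indexedAlexanderOp, ← add_smul, add_sub_cancel, one_smul, zero_smul, add_zero]

theorem indexedAlexanderOp_left_bijective {t : R} (ht : IsUnit t) (u : M) (i : ℤ) (b : M) :
    Function.Bijective fun a => indexedAlexanderOp t u i a b := by
  have translation_bijective : Function.Bijective (· + ((1 - t) • b + i • u)) :=
    AddGroup.addRight_bijective _
  simpa only [indexedAlexanderOp, add_assoc, Function.comp_def] using
    translation_bijective.comp ht.smul_bijective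

theorem indexedAlexanderOp_distrib (t : R) (u : M) (i j : ℤ) (a b c : M) :
    indexedAlexanderOp t u j (indexedAlexanderOp t u i a b) c =
      indexedAlexanderOp t u i (indexedAlexanderOp t u j a c)
        (indexedAlexanderOp t u (j - i) b c) := by
  simp only [indexedAlexanderOp, smul_add, smul_sub, sub_smul, one_smul,
    smul_comm t i u, smul_comm t j u]
  abel

theorem stmt_3_general {t : R} (ht : IsUnit t) (u : M) :
    IsIndexedQuandle fun (i : ℤ) (a b : M) => t • a + (1 - t) • b + i • u where
  idem := indexedAlexanderOp_zero_self t u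
  bij := indexedAlexanderOp_left_bijective ht u
  distrib := indexedAlexanderOp_distrib t u

end IndexedAlexanderOp

/-- The Laurent polynomial ring `ℤ[t, t⁻¹]` with operations
`a ∗_i b = t·a + (1 − t)·b + i` is an indexed quandle. -/
theorem stmt_3 :
    IsIndexedQuandle (fun (i : ℤ) (a b : LaurentPolynomial ℤ) =>
      T 1 * a + (1 - T 1) * b + (i : LaurentPolynomial ℤ)) := by
  simpa only [smul_eq_mul, zsmul_one] using
    stmt_3_general (isUnit_T (R := ℤ) 1) (1 : LaurentPolynomial ℤ)
end

section
/- Let G be a group, φ an automorphism of G, and z an element of the center of G. Then the operations a ∗_i b = φ(a·b⁻¹)·b·z^i (for i ∈ ℤ) make G an indexed quandle. -/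
section AlexanderOp

variable {G : Type*} [Group G]

/-- The generalized Alexander quandle operation `a ∗ b = φ(a·b⁻¹)·b` of an endomorphism `φ`,
followed by right translation by `u`. The translation is by an arbitrary element, so that the
operation `∗_i` of the indexed quandle is the case `u = z ^ i`. -/
def alexanderOp (φ : G →* G) (u a b : G) : G :=
  φ (a * b⁻¹) * b * u

theorem alexanderOp_one_self (φ : G →* G) (a : G) : alexanderOp φ 1 a a = a := by
  simp [alexanderOp]

theorem alexanderOp_bijective {φ : G →* G} (hφ : Function.Bijective φ) (u b : G) :
    Function.Bijective fun a => alexanderOp φ u a b :=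
  (Group.mulRight_bijective u).comp <| (Group.mulRight_bijective b).comp <|
    hφ.comp (Group.mulRight_bijective b⁻¹)

theorem alexanderOp_mul_mul_inv_alexanderOp (φ : G →* G) {u : G}
    (hu : u ∈ Subgroup.center G) (w a b c : G) :
    alexanderOp φ (w * u) a c * (alexanderOp φ w b c)⁻¹ = φ (a * b⁻¹) * u := by
  have hcomm (g : G) : g * u = u * g := Subgroup.mem_center_iff.mp hu g
  rw [mul_inv_eq_iff_eq_mul]
  calc φ (a * c⁻¹) * c * (w * u)
      = φ (a * b⁻¹) * (φ (b * c⁻¹) * c * w * u) := by simp [mul_assoc]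
    _ = φ (a * b⁻¹) * u * (φ (b * c⁻¹) * c * w) := by rw [hcomm, ← mul_assoc]

/-- On the right, `c` and `w` cancel in the quotient under the outer `φ` and leave a factor `u`,
matching the `u` that the inner operation on the left puts under `φ`. -/
theorem alexanderOp_alexanderOp (φ : G →* G) {u : G} (hu : u ∈ Subgroup.center G)
    (w a b c : G) :
    alexanderOp φ (w * u) (alexanderOp φ u a b) c =
      alexanderOp φ u (alexanderOp φ (w * u) a c) (alexanderOp φ w b c) := by
  have hcomm : b * u = u * b := Subgroup.mem_center_iff.mp hu b
  calc φ (φ (a * b⁻¹) * b * u * c⁻¹) * c * (w * u)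
      = φ (φ (a * b⁻¹) * u) * (φ (b * c⁻¹) * c * w) * u := by
        rw [mul_assoc (φ (a * b⁻¹)) b u, hcomm]
        simp only [map_mul, mul_assoc]
    _ = φ (alexanderOp φ (w * u) a c * (alexanderOp φ w b c)⁻¹) * alexanderOp φ w b c * u := by
        rw [alexanderOp_mul_mul_inv_alexanderOp φ hu, alexanderOp]

end AlexanderOp

/-- A group `G` with an automorphism `φ` and a central element `z` is an indexed
quandle under the operations `a ∗_i b = φ(a·b⁻¹)·b·z^i`. -/
theorem stmt_4 {G : Type*} [Group G] (φ : G ≃* G) (z : G)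
    (hz : z ∈ Subgroup.center G) :
    IsIndexedQuandle (fun (i : ℤ) (a b : G) => φ (a * b⁻¹) * b * z ^ i) := by
  change IsIndexedQuandle fun i => alexanderOp (φ : G →* G) (z ^ i)
  refine ⟨fun a => ?idem, fun i b => ?bij, fun i j a b c => ?distrib⟩
  case idem => rw [zpow_zero, alexanderOp_one_self]
  case bij => exact alexanderOp_bijective φ.bijective (z ^ i) b
  case distrib =>
    have hzj : z ^ j = z ^ (j - i) * z ^ i := by rw [← zpow_add, sub_add_cancel]
    rw [hzj]
    exact alexanderOp_alexanderOp φ (zpow_mem hz i) (z ^ (j - i)) a b c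
end

section
/- Let (Q, ∗) be a connected quandle, i.e., for all x, z ∈ Q, z can be obtained from x by finitely many applications of the maps a ↦ a ∗ y (for various y ∈ Q) and their inverses (equivalently, x and z are related by the equivalence relation generated by the relation { (a, a ∗ y) : a, y ∈ Q }). Let 𝔊_Q be the group with one generator g(x,y) for each pair (x, y) ∈ Q × Q, and relations g(x,x) = 1, g(x,y) = g(x∗z, y∗z), and g(x,z) = g(x∗y, z) for all x, y, z ∈ Q. Then 𝔊_Q is the trivial group, i.e., every element of 𝔊_Q equals the identity. -/
/-- A quandle structure on a type `Q` given by a binary operation `star`. -/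
structure IsQuandle {Q : Type*} (star : Q → Q → Q) : Prop where
  idem : ∀ a, star a a = a
  bij : ∀ b : Q, Function.Bijective fun a => star a b
  distrib : ∀ a b c, star (star a b) c = star (star a c) (star b c)

/-- The relator set of the group `𝔊_Q` associated to a quandle `(Q, ∗)`:
generators `g(x,y)` for `(x,y) ∈ Q × Q`, relations `g(x,x) = 1`,
`g(x,y) = g(x∗z, y∗z)` and `g(x,z) = g(x∗y, z)`. -/
def quandleRels {Q : Type*} (star : Q → Q → Q) : Set (FreeGroup (Q × Q)) :=
  {w | (∃ x : Q, w = FreeGroup.of (x, x)) ∨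
    (∃ x y z : Q, w = FreeGroup.of (x, y) * (FreeGroup.of (star x z, star y z))⁻¹) ∨
    (∃ x y z : Q, w = FreeGroup.of (x, z) * (FreeGroup.of (star x y, z))⁻¹)}

theorem eq_of_eqvGen {α β : Type*} {r : α → α → Prop} {f : α → β}
    (hf : ∀ a b, r a b → f a = f b) {x y : α} (hxy : Relation.EqvGen r x y) : f x = f y :=
  congrArg (Quot.lift f hf) (Quot.eqvGen_sound hxy)

theorem presentedGroup_eq_one_of_forall_of_eq_one {α : Type*} {rels : Set (FreeGroup α)}
    (h : ∀ a, (PresentedGroup.of a : PresentedGroup rels) = 1) (g : PresentedGroup rels) :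
    g = 1 :=
  Subgroup.mem_bot.mp (PresentedGroup.generated_by rels ⊥ (fun a => Subgroup.mem_bot.mpr (h a)) g)

namespace quandleRels

variable {Q : Type*} (star : Q → Q → Q)

theorem of_diag_eq_one (x : Q) :
    (PresentedGroup.of (x, x) : PresentedGroup (quandleRels star)) = 1 :=
  PresentedGroup.one_of_mem (Or.inl ⟨x, rfl⟩)

theorem of_eq_of_star_left (x y z : Q) :
    (PresentedGroup.of (x, z) : PresentedGroup (quandleRels star)) =
      PresentedGroup.of (star x y, z) :=
  PresentedGroup.mk_eq_mk_of_mul_inv_mem (Or.inr (Or.inr ⟨x, y, z, rfl⟩))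

variable {star}

theorem of_eq_of_eqvGen_left {x x' : Q}
    (h : Relation.EqvGen (fun a b : Q => ∃ y : Q, b = star a y) x x') (z : Q) :
    (PresentedGroup.of (x, z) : PresentedGroup (quandleRels star)) =
      PresentedGroup.of (x', z) := by
  refine eq_of_eqvGen (f := fun a => PresentedGroup.of (a, z)) ?_ h
  rintro a _ ⟨y, rfl⟩
  exact of_eq_of_star_left star a y z

theorem of_eq_one_of_eqvGen {x z : Q}
    (h : Relation.EqvGen (fun a b : Q => ∃ y : Q, b = star a y) x z) :
    (PresentedGroup.of (x, z) : PresentedGroup (quandleRels star)) = 1 :=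
  (of_eq_of_eqvGen_left h z).trans (of_diag_eq_one star z)

end quandleRels

theorem stmt_9_general {Q : Type*} (star : Q → Q → Q)
    (hconn : ∀ x z : Q,
      Relation.EqvGen (fun a b : Q => ∃ y : Q, b = star a y) x z) :
    ∀ g : PresentedGroup (quandleRels star), g = 1 :=
  presentedGroup_eq_one_of_forall_of_eq_one fun (x, z) =>
    quandleRels.of_eq_one_of_eqvGen (hconn x z)

/-- If `(Q, ∗)` is a connected quandle (any two elements are related by the
equivalence relation generated by `a ↦ a ∗ y`), then the group `𝔊_Q` is trivial. -/
theorem stmt_9 {Q : Type*} (star : Q → Q → Q) (hQ : IsQuandle star)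
    (hconn : ∀ x z : Q,
      Relation.EqvGen (fun a b : Q => ∃ y : Q, b = star a y) x z) :
    ∀ g : PresentedGroup (quandleRels star), g = 1 :=
  stmt_9_general star hconn
end
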